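/- Let K > 0, α ∈ (0,1), β ∈ (0,1), η ∈ (0,1), and let θ < 0 be a real number; set γ := 2(1−α)/K. Let g : [0,1] → ℝ be twice continuously differentiable with |g''(λ)| ≤ K for all λ ∈ [0,1] and with right derivative at 0 satisfying g'(0) ≤ η θ. Then: (a) the set A := { ℓ ∈ ℕ : g(β^ℓ) − g(0) ≤ α β^ℓ η θ } is nonempty; (b) its least element ℓ* satisfies β^{ℓ*} ≥ β · min(1, η γ |θ|); and (c) consequently g(β^{ℓ*}) − g(0) ≤ −α β η · min(1, η γ |θ|) · |θ|. -/

import Mathlib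

/-!
Integrating `g'' ≤ K` twice from `0` gives `g s ≤ g 0 + g' 0 * s + K / 2 * s ^ 2` on `[0, 1]`
(`quadratic_upper_bound`). Since `g' 0 ≤ η θ < 0`, the quadratic term is absorbed by the slack
`(1 - α) η |θ| s` as soon as `s ≤ η γ |θ|`, so every such step passes the Armijo test
(`armijo_of_le`). As `β ^ l → 0`, some index passes. If the first passing index is positive,
its predecessor fails, so the preceding step exceeds `η γ |θ|`; multiplying by `β` gives the lower
bound on the accepted step, and the Armijo inequality at that step turns it into the decrease.
-/

open Set

/-- One integration: the one-sided comparison principle for derivatives taken within `[0, 1]`. -/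
lemma le_of_derivWithin_le {f f' B B' : ℝ → ℝ}
    (hf : ∀ x ∈ Icc (0 : ℝ) 1, HasDerivWithinAt f (f' x) (Icc (0 : ℝ) 1) x)
    (hB : ∀ x, HasDerivAt B (B' x) x) (h0 : f 0 ≤ B 0)
    (hle : ∀ x ∈ Icc (0 : ℝ) 1, f' x ≤ B' x) {x : ℝ} (hx : x ∈ Icc (0 : ℝ) 1) :
    f x ≤ B x := by
  refine image_le_of_deriv_right_le_deriv_boundary (f' := f') (B' := B')
    (fun y hy => (hf y hy).continuousWithinAt) (fun y hy => ?_) h0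
    (fun y _ => (hB y).continuousAt.continuousWithinAt) (fun y _ => (hB y).hasDerivWithinAt)
    (fun y hy => hle y (Ico_subset_Icc_self hy)) hx
  exact (hf y (Ico_subset_Icc_self hy)).mono_of_mem_nhdsWithin (Icc_mem_nhdsGE_of_mem hy)

lemma quadratic_upper_bound {K : ℝ} {g g' g'' : ℝ → ℝ}
    (hd1 : ∀ l ∈ Icc (0 : ℝ) 1, HasDerivWithinAt g (g' l) (Icc (0 : ℝ) 1) l)
    (hd2 : ∀ l ∈ Icc (0 : ℝ) 1, HasDerivWithinAt g' (g'' l) (Icc (0 : ℝ) 1) l)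
    (hbound : ∀ l ∈ Icc (0 : ℝ) 1, g'' l ≤ K) {s : ℝ} (hs : s ∈ Icc (0 : ℝ) 1) :
    g s ≤ g 0 + g' 0 * s + K / 2 * s ^ 2 := by
  have h1 : ∀ x ∈ Icc (0 : ℝ) 1, g' x ≤ g' 0 + K * x := fun x hx =>
    le_of_derivWithin_le (B := fun x => g' 0 + K * x) (B' := fun _ => K) hd2
      (fun x => by simpa using ((hasDerivAt_id x).const_mul K).const_add (g' 0))
      (by simp) hbound hx
  refine le_of_derivWithin_le (B := fun s => g 0 + g' 0 * s + K / 2 * s ^ 2)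
    (B' := fun x => g' 0 + K * x) hd1 (fun x => ?_) (by simp) h1 hs
  have h := (((hasDerivAt_id x).const_mul (g' 0)).const_add (g 0)).add
    (((hasDerivAt_id x).pow 2).const_mul (K / 2))
  exact h.congr_deriv (by simp; ring)

/-- Every step of length at most `η γ |θ|`, where `γ = 2 (1 - α) / K`, passes the Armijo test. -/
lemma armijo_of_le {K α η θ : ℝ} (hK : 0 < K) (hθ : θ < 0) {g g' g'' : ℝ → ℝ}
    (hd1 : ∀ l ∈ Icc (0 : ℝ) 1, HasDerivWithinAt g (g' l) (Icc (0 : ℝ) 1) l)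
    (hd2 : ∀ l ∈ Icc (0 : ℝ) 1, HasDerivWithinAt g' (g'' l) (Icc (0 : ℝ) 1) l)
    (hbound : ∀ l ∈ Icc (0 : ℝ) 1, g'' l ≤ K) (hg'0 : g' 0 ≤ η * θ)
    {s : ℝ} (hs : s ∈ Icc (0 : ℝ) 1) (hle : s ≤ η * (2 * (1 - α) / K) * |θ|) :
    g s - g 0 ≤ α * s * η * θ := by
  have hq := quadratic_upper_bound hd1 hd2 hbound hs
  have hslope : g' 0 * s ≤ η * θ * s := mul_le_mul_of_nonneg_right hg'0 hs.1
  have hKs : K * s ≤ -(2 * (1 - α) * η * θ) := by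
    calc K * s ≤ K * (η * (2 * (1 - α) / K) * |θ|) := mul_le_mul_of_nonneg_left hle hK.le
      _ = -(2 * (1 - α) * η * θ) := by rw [abs_of_neg hθ]; field_simp
  have hKss := mul_le_mul_of_nonneg_right hKs hs.1
  linarith

/-- The Armijo step-size analysis in the proof of **Proposition 3.4** (Eqs. (26)–(30)).
For a function `g` twice continuously differentiable on `[0,1]` with `|g''| ≤ K`
and right derivative at `0` at most `η θ < 0`:
(a) the Armijo set `A = {ℓ : g(βˡ) − g(0) ≤ α βˡ η θ}` is nonempty;
(b) its least element `ℓ*` satisfies `β^{ℓ*} ≥ β · min 1 (η γ |θ|)` where `γ = 2(1−α)/K`;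
(c) consequently `g(β^{ℓ*}) − g(0) ≤ −α β η · min 1 (η γ |θ|) · |θ|`. -/
theorem armijo_step_analysis (K α β η θ γ : ℝ)
    (hK : 0 < K) (hα : α ∈ Ioo (0 : ℝ) 1) (hβ : β ∈ Ioo (0 : ℝ) 1)
    (hη : η ∈ Ioo (0 : ℝ) 1) (hθ : θ < 0) (hγ : γ = 2 * (1 - α) / K)
    (g g' g'' : ℝ → ℝ)
    (hd1 : ∀ l ∈ Icc (0 : ℝ) 1, HasDerivWithinAt g (g' l) (Icc (0 : ℝ) 1) l)
    (hd2 : ∀ l ∈ Icc (0 : ℝ) 1, HasDerivWithinAt g' (g'' l) (Icc (0 : ℝ) 1) l)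
    (hcont : ContinuousOn g'' (Icc (0 : ℝ) 1))
    (hbound : ∀ l ∈ Icc (0 : ℝ) 1, |g'' l| ≤ K)
    (hg'0 : g' 0 ≤ η * θ) :
    {l : ℕ | g (β ^ l) - g 0 ≤ α * β ^ l * η * θ}.Nonempty ∧
    β ^ (sInf {l : ℕ | g (β ^ l) - g 0 ≤ α * β ^ l * η * θ}) ≥ β * min 1 (η * γ * |θ|) ∧
    g (β ^ (sInf {l : ℕ | g (β ^ l) - g 0 ≤ α * β ^ l * η * θ})) - g 0 ≤
      -(α * β * η * min 1 (η * γ * |θ|) * |θ|) := by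
  set A := {l : ℕ | g (β ^ l) - g 0 ≤ α * β ^ l * η * θ}
  have hθ' : 0 < |θ| := abs_pos.mpr hθ.ne
  have hγ0 : 0 < γ := hγ ▸ div_pos (mul_pos two_pos (sub_pos.mpr hα.2)) hK
  have hpos : 0 < η * γ * |θ| := mul_pos (mul_pos hη.1 hγ0) hθ'
  have hmem : ∀ l : ℕ, β ^ l ≤ η * γ * |θ| → l ∈ A := fun l hl =>
    armijo_of_le hK hθ hd1 hd2 (fun x hx => (le_abs_self _).trans (hbound x hx)) hg'0
      ⟨pow_nonneg hβ.1.le l, pow_le_one₀ hβ.1.le hβ.2.le⟩ (hγ ▸ hl)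
  have hne : A.Nonempty := by
    obtain ⟨l, hl⟩ := exists_pow_lt_of_lt_one hpos hβ.2
    exact ⟨l, hmem l hl.le⟩
  have hstep : β * min 1 (η * γ * |θ|) ≤ β ^ sInf A := by
    rcases hn : sInf A with _ | n
    · rw [pow_zero]
      exact mul_le_one₀ hβ.2.le (le_min zero_le_one hpos.le) (min_le_left _ _)
    · have hnot : n ∉ A := Nat.notMem_of_lt_sInf (by omega)
      have hlt : η * γ * |θ| < β ^ n := lt_of_not_ge fun h => hnot (hmem n h)
      rw [pow_succ']
      exact mul_le_mul_of_nonneg_left ((min_le_right _ _).trans hlt.le) hβ.1.le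
  refine ⟨hne, hstep, ?_⟩
  have harm : g (β ^ sInf A) - g 0 ≤ α * β ^ sInf A * η * θ := Nat.sInf_mem hne
  have hc : 0 ≤ α * η * |θ| := (mul_pos (mul_pos hα.1 hη.1) hθ').le
  have hmul := mul_le_mul_of_nonneg_left hstep hc
  calc g (β ^ sInf A) - g 0 ≤ α * β ^ sInf A * η * θ := harm
    _ = -(α * η * |θ| * β ^ sInf A) := by rw [abs_of_neg hθ]; ring
    _ ≤ -(α * η * |θ| * (β * min 1 (η * γ * |θ|))) := neg_le_neg hmul
    _ = -(α * β * η * min 1 (η * γ * |θ|) * |θ|) := by ring
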